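/- Let F be a finite extension of ℚ₂ of degree m that does not contain a primitive fourth root of unity. Then the number |Ab(4)| of abelian extensions of F of degree 4 (inside a fixed algebraic closure of F) equals (20·2^{2m} − 12·2^m + 1)/3, i.e. 20·2^{2m}/3 − 4·2^m + 1/3. -/

import Mathlib

/-!
Put `t = 2 ^ (m + 1)`, and let `L / F` be quartic Galois; its group has order `4`, hence is abelian.
Such an `L` has one or three quadratic subfields, and two distinct quadratic fields lie in exactly
one `L`. So if there are `A` fields `L` and `Q` quadratic fields `K`, then
`3 A + Q (Q - 1) = 3 ∑ K, #{L ⊇ K}`.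

* The squares have index `2 ^ (m + 2) = 2 t` in `Fˣ`, because squaring maps `1 + 4 O`
  bijectively onto `1 + 8 O` by Hensel's lemma; hence `Q = 2 t - 1`.
* `K(√a)` is Galois over `F` iff the norm of `a` becomes a square in `K`. This gives `2 t - 1` or
  `t - 1` fields `L ⊇ K`, according to whether `-1` is a norm from `K` or not.
* By the symmetry of the Hilbert symbol, `-1` is a norm from `F(√a)` iff `a` is a norm from
  `F(√-1)`, which is the case for `t - 1` of the fields `K`.

Altogether `3 A = (t - 1) (5 t - 1)`.
-/

section IndexOfPowers

theorem index_range_eq_card_ker_mul_relIndex_map {G : Type*} [CommGroup G] (f : G →* G)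
    (B : Subgroup G) [B.FiniteIndex] (hmap : B.map f ≤ B) (hker : B ⊓ f.ker = ⊥) :
    f.range.index = Nat.card f.ker * (B.map f).relIndex B := by
  have hsup : Nat.card f.ker * (B ⊔ f.ker).index = B.index := by
    rw [← Subgroup.relIndex_mul_index (le_sup_left : B ≤ B ⊔ f.ker), Subgroup.relIndex_sup_left,
      ← Subgroup.inf_relIndex_right, hker, Subgroup.relIndex_bot_left]
  have hpos : (B ⊔ f.ker).index ≠ 0 := fun h ↦ Subgroup.FiniteIndex.index_ne_zero (by
    rw [← hsup, h, mul_zero])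
  have hindex : (B.map f).relIndex B * B.index = (B ⊔ f.ker).index * f.range.index := by
    rw [Subgroup.relIndex_mul_index hmap, Subgroup.index_map]
  apply mul_left_cancel₀ hpos
  rw [← hindex, ← hsup]
  ring

theorem square_eq_range_powMonoidHom (G : Type*) [CommGroup G] :
    Subgroup.square G = (powMonoidHom 2 : G →* G).range := by
  ext x
  simp only [Subgroup.mem_square, isSquare_iff_exists_sq, MonoidHom.mem_range, powMonoidHom_apply,
    eq_comm]

theorem index_square_eq_mul_of_exact {H G A : Type*} [CommGroup H] [CommGroup G] [CommGroup A]
    [IsMulTorsionFree A] {ι : H →* G} {φ : G →* A} (hι : Function.Injective ι)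
    (hφ : Function.Surjective φ) (hexact : φ.ker = ι.range) :
    (Subgroup.square G).index = (Subgroup.square H).index * (Subgroup.square A).index := by
  have hsup : Subgroup.square G ⊔ ι.range = (Subgroup.square A).comap φ := by
    rw [← hexact, ← Subgroup.comap_map_eq]
    congr 1
    simp only [square_eq_range_powMonoidHom, MonoidHom.map_range]
    rw [show φ.comp (powMonoidHom 2) = (powMonoidHom 2).comp φ by ext; simp,
      MonoidHom.range_comp, MonoidHom.range_eq_top.2 hφ, MonoidHom.range_eq_map]
  have hcomap : (Subgroup.square G).comap ι = Subgroup.square H := by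
    ext h
    simp only [Subgroup.mem_comap, Subgroup.mem_square, isSquare_iff_exists_sq]
    refine ⟨?_, fun ⟨r, hr⟩ ↦ ⟨ι r, by rw [hr, map_pow]⟩⟩
    rintro ⟨g, hg⟩
    have hgker : g ∈ φ.ker := by
      rw [MonoidHom.mem_ker, ← pow_eq_one_iff_left two_ne_zero, ← map_pow, ← hg,
        ← MonoidHom.mem_ker, hexact]
      exact ⟨h, rfl⟩
    obtain ⟨r, rfl⟩ := hexact ▸ hgker
    exact ⟨r, hι (by rw [hg, map_pow])⟩
  rw [← Subgroup.relIndex_mul_index (le_sup_left : Subgroup.square G ≤ _ ⊔ ι.range),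
    Subgroup.relIndex_sup_left, hsup, Subgroup.index_comap_of_surjective _ hφ,
    ← Subgroup.index_comap, hcomap]

theorem index_square_multiplicative_int : (Subgroup.square (Multiplicative ℤ)).index = 2 := by
  refine Subgroup.index_eq_two_iff.2 ⟨Multiplicative.ofAdd 1, fun b ↦ ?_⟩
  have hmem (n : Multiplicative ℤ) : n ∈ Subgroup.square (Multiplicative ℤ) ↔ Even n.toAdd := by
    rw [Subgroup.mem_square, even_toAdd_iff]
  rw [hmem, hmem, toAdd_mul, toAdd_ofAdd, Int.even_add_one, xor_comm]
  exact xor_not_right.2 Iff.rfl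

end IndexOfPowers

theorem index_square_units_fractionRing (O F : Type*) [CommRing O] [IsDomain O]
    [IsDiscreteValuationRing O] [Field F] [Algebra O F] [IsFractionRing O F] :
    (Subgroup.square Fˣ).index = (Subgroup.square Oˣ).index * 2 := by
  have hinj := IsFractionRing.injective O F
  let v := IsDiscreteValuationRing.maximalIdeal O
  have hv (x : Fˣ) : v.valuationOfNeZero x = 1 ↔ v.valuation F x = 1 := by
    rw [← v.valuationOfNeZero_eq, ← WithZero.coe_one, WithZero.coe_inj]
  rw [← index_square_multiplicative_int]
  refine index_square_eq_mul_of_exact (ι := Units.map (algebraMap O F : O →* F))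
    (φ := v.valuationOfNeZero) (Units.map_injective hinj) (fun n ↦ ?_) ?_
  · obtain ⟨x, hx⟩ := v.valuation_surjective F n
    have hx0 : x ≠ 0 := by
      rintro rfl
      simp at hx
    refine ⟨Units.mk0 x hx0, ?_⟩
    rw [← WithZero.coe_inj, v.valuationOfNeZero_eq, ← hx, Units.val_mk0]
  · ext x
    rw [MonoidHom.mem_ker, hv]
    constructor
    · intro hx
      obtain ⟨a, ha⟩ := IsDiscreteValuationRing.exists_lift_of_le_one hx.le
      obtain ⟨b, hb⟩ := IsDiscreteValuationRing.exists_lift_of_le_one (A := O) (K := F)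
        (x := (x⁻¹ : Fˣ)) (by rw [Units.val_inv_eq_inv_val, map_inv₀]; exact (inv_eq_one.2 hx).le)
      have hab : a * b = 1 := hinj (by rw [map_mul, ha, hb, Units.mul_inv, map_one])
      exact ⟨Units.mkOfMulEqOne a b hab, Units.ext ha⟩
    · rintro ⟨u, rfl⟩
      exact (hv _).1 (v.valuation_of_unit_eq u)

section CongruenceUnits

variable {O : Type*} [CommRing O]

/-- The units of `O` congruent to `1` modulo `I`; for `I` a power of the maximal ideal these are the
higher unit groups. -/
def congruenceUnits (I : Ideal O) : Subgroup Oˣ :=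
  (Units.map (Ideal.Quotient.mk I : O →* O ⧸ I)).ker

theorem mem_congruenceUnits {I : Ideal O} {u : Oˣ} :
    u ∈ congruenceUnits I ↔ (u : O) - 1 ∈ I := by
  rw [congruenceUnits, MonoidHom.mem_ker, Units.ext_iff, Units.coe_map, Units.val_one,
    MonoidHom.coe_coe, ← map_one (Ideal.Quotient.mk I), Ideal.Quotient.eq]

theorem mem_congruenceUnits_span_singleton {a : O} {u : Oˣ} :
    u ∈ congruenceUnits (Ideal.span {a}) ↔ ∃ x, (u : O) = 1 + a * x := by
  simp only [mem_congruenceUnits, Ideal.mem_span_singleton, Dvd.dvd, sub_eq_iff_eq_add']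

theorem exists_mem_congruenceUnits_span_singleton {a : O} (ha : a ∈ Ideal.jacobson (⊥ : Ideal O))
    (x : O) : ∃ u ∈ congruenceUnits (Ideal.span {a}), (u : O) = 1 + a * x := by
  obtain ⟨u, hu⟩ : IsUnit (1 + a * x) := add_comm (a * x) 1 ▸ Ideal.mem_jacobson_bot.1 ha x
  exact ⟨u, mem_congruenceUnits_span_singleton.2 ⟨x, hu⟩, hu⟩

instance congruenceUnits_finiteIndex (I : Ideal O) [Finite (O ⧸ I)] :
    (congruenceUnits I).FiniteIndex :=
  inferInstanceAs (Units.map (Ideal.Quotient.mk I : O →* O ⧸ I)).ker.FiniteIndex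

theorem relIndex_congruenceUnits_mul [IsDomain O] {a b : O} (ha : a ≠ 0)
    (hjac : a ∈ Ideal.jacobson (⊥ : Ideal O)) (hba : b ∣ a) :
    (congruenceUnits (Ideal.span {a * b})).relIndex (congruenceUnits (Ideal.span {a})) =
      Nat.card (O ⧸ Ideal.span {b}) := by
  choose x hx using fun u : congruenceUnits (Ideal.span {a}) ↦
    mem_congruenceUnits_span_singleton.1 u.2
  let φ : congruenceUnits (Ideal.span {a}) →* Multiplicative (O ⧸ Ideal.span {b}) :=
    MonoidHom.mk' (fun u ↦ Multiplicative.ofAdd (Ideal.Quotient.mk _ (x u))) fun u v ↦ by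
      have hxuv : x (u * v) = x u + x v + a * (x u * x v) := by
        apply mul_left_cancel₀ ha
        have := hx (u * v)
        simp only [Subgroup.coe_mul, Units.val_mul, hx] at this
        linear_combination -this
      rw [← ofAdd_add, ← map_add, hxuv]
      congr 1
      rw [Ideal.Quotient.eq, Ideal.mem_span_singleton, add_sub_cancel_left]
      exact hba.mul_right _
  have hsurj : φ.range = ⊤ := by
    refine MonoidHom.range_eq_top.2 fun y ↦ ?_
    obtain ⟨z, hz⟩ := Ideal.Quotient.mk_surjective y.toAdd
    obtain ⟨u, hu, huz⟩ := exists_mem_congruenceUnits_span_singleton hjac z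
    have hxz : x ⟨u, hu⟩ = z :=
      mul_left_cancel₀ ha (add_left_cancel ((hx ⟨u, hu⟩).symm.trans huz))
    exact ⟨⟨u, hu⟩, congrArg Multiplicative.ofAdd ((congrArg _ hxz).trans hz)⟩
  have hker : φ.ker = (congruenceUnits (Ideal.span {a * b})).subgroupOf _ := by
    ext u
    have hu : u ∈ φ.ker ↔ Ideal.Quotient.mk (Ideal.span {b}) (x u) = 0 := Iff.rfl
    rw [hu, Ideal.Quotient.eq_zero_iff_mem, Ideal.mem_span_singleton, Subgroup.mem_subgroupOf,
      mem_congruenceUnits, hx, add_sub_cancel_left, Ideal.mem_span_singleton,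
      mul_dvd_mul_iff_left ha]
  rw [Subgroup.relIndex, ← hker, Subgroup.index_ker, hsurj, Subgroup.card_top]
  exact Nat.card_congr Multiplicative.toAdd

theorem map_square_congruenceUnits_four [HenselianRing O (Ideal.span {2})] :
    (congruenceUnits (Ideal.span {(4 : O)})).map (powMonoidHom 2) =
      congruenceUnits (Ideal.span {4 * 2}) := by
  ext v
  simp only [Subgroup.mem_map, mem_congruenceUnits_span_singleton, powMonoidHom_apply]
  constructor
  · rintro ⟨u, ⟨x, hx⟩, rfl⟩
    exact ⟨x + 2 * x ^ 2, by rw [Units.val_pow_eq_pow_val, hx]; ring⟩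
  · rintro ⟨y, hy⟩
    let f : Polynomial O := .X ^ 2 + .X - .C (2 * y)
    have hf : f.Monic := by unfold f; monicity!
    obtain ⟨w, hroot, hw⟩ := HenselianRing.is_henselian (I := Ideal.span {(2 : O)}) f hf 0
      (by simp [f, Ideal.mem_span_singleton]) (by simp [f])
    obtain ⟨x, rfl⟩ : 2 ∣ w := by simpa [Ideal.mem_span_singleton] using hw
    have hroot : (2 * x) ^ 2 + 2 * x - 2 * y = 0 := by simpa [f] using hroot
    have hjac : (2 : O) ∈ Ideal.jacobson ⊥ :=
      HenselianRing.jac (Ideal.mem_span_singleton_self (2 : O))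
    obtain ⟨u, -, hu⟩ := exists_mem_congruenceUnits_span_singleton hjac (2 * x)
    refine ⟨u, ⟨x, by rw [hu]; ring⟩, Units.ext ?_⟩
    rw [Units.val_pow_eq_pow_val, hu, hy]
    linear_combination 4 * hroot

theorem neg_one_notMem_congruenceUnits_four [IsDomain O] (h2 : (2 : O) ≠ 0)
    (hjac : (2 : O) ∈ Ideal.jacobson (⊥ : Ideal O)) :
    (-1 : Oˣ) ∉ congruenceUnits (Ideal.span {(4 : O)}) := fun h ↦ by
  obtain ⟨x, hx⟩ := mem_congruenceUnits_span_singleton.1 h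
  obtain ⟨u, -, hu⟩ := exists_mem_congruenceUnits_span_singleton hjac x
  refine mul_ne_zero h2 u.ne_zero ?_
  rw [Units.val_neg, Units.val_one] at hx
  linear_combination 2 * hu - hx

theorem mem_ker_powMonoidHom_two_iff [IsDomain O] {u : Oˣ} :
    u ∈ (powMonoidHom 2 : Oˣ →* Oˣ).ker ↔ u = 1 ∨ u = -1 := by
  rw [MonoidHom.mem_ker, powMonoidHom_apply, Units.ext_iff, Units.ext_iff, Units.ext_iff]
  simp

theorem card_ker_powMonoidHom_two [IsDomain O] (hne : (-1 : Oˣ) ≠ 1) :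
    Nat.card (powMonoidHom 2 : Oˣ →* Oˣ).ker = 2 := by
  have hker : ((powMonoidHom 2 : Oˣ →* Oˣ).ker : Set Oˣ) = {1, -1} :=
    Set.ext fun _ ↦ mem_ker_powMonoidHom_two_iff
  rw [← SetLike.coe_sort_coe, hker, Nat.card_coe_set_eq, Set.ncard_pair hne.symm]

theorem index_square_units_of_henselianRing [IsDomain O] [HenselianRing O (Ideal.span {2})]
    [Finite (O ⧸ Ideal.span {(2 : O)})] (h2 : (2 : O) ≠ 0) :
    (Subgroup.square Oˣ).index = 2 * Nat.card (O ⧸ Ideal.span {(2 : O)}) := by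
  have hjac : (2 : O) ∈ Ideal.jacobson ⊥ :=
    HenselianRing.jac (Ideal.mem_span_singleton_self (2 : O))
  have h4 : (4 : O) = 2 * 2 := by norm_num
  have : Finite (O ⧸ Ideal.span {(4 : O)}) := by
    rw [h4, ← pow_two, ← Ideal.span_singleton_pow]
    exact Ideal.finite_quotient_pow (Submodule.fg_span_singleton _) 2
  have hneg := neg_one_notMem_congruenceUnits_four h2 hjac
  have hinf : congruenceUnits (Ideal.span {(4 : O)}) ⊓ (powMonoidHom 2).ker = ⊥ := by
    rw [eq_bot_iff]
    rintro u ⟨hu, huker⟩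
    exact (mem_ker_powMonoidHom_two_iff.1 huker).resolve_right (by rintro rfl; exact hneg hu)
  have hmap : (congruenceUnits (Ideal.span {(4 : O)})).map (powMonoidHom 2) ≤
      congruenceUnits (Ideal.span {4}) := by
    intro u
    rw [map_square_congruenceUnits_four, mem_congruenceUnits, mem_congruenceUnits]
    exact fun hu ↦ Ideal.span_singleton_le_span_singleton.2 (dvd_mul_right _ _) hu
  rw [square_eq_range_powMonoidHom, index_range_eq_card_ker_mul_relIndex_map _ _ hmap hinf,
    card_ker_powMonoidHom_two fun h ↦ hneg (h.symm ▸ one_mem _), map_square_congruenceUnits_four,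
    relIndex_congruenceUnits_mul (h4 ▸ mul_ne_zero h2 h2) (h4 ▸ Ideal.mul_mem_left _ _ hjac)
      ⟨2, h4⟩]

end CongruenceUnits

theorem isAdicComplete_of_finite_of_free {R M : Type*} [CommRing R] (I : Ideal R)
    [IsAdicComplete I R] [AddCommGroup M] [Module R M] [Module.Finite R M] [Module.Free R M] :
    IsAdicComplete I M := by
  classical
  let e := (Module.Free.chooseBasis R M).equivFun
  let E := (AdicCompletion.congr I e).trans (AdicCompletion.piEquivOfFintype I fun _ ↦ R)
  have hE : E ∘ AdicCompletion.of I M = Pi.map (fun _ ↦ AdicCompletion.of I R) ∘ e := by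
    ext x j : 2
    simp [E, AdicCompletion.piEquivOfFintype_apply, AdicCompletion.pi, AdicCompletion.map_of]
  rw [← AdicCompletion.of_bijective_iff, ← Function.Bijective.of_comp_iff' E.bijective, hE]
  exact (Function.Bijective.piMap fun _ ↦ AdicCompletion.of_bijective I R).comp e.bijective

theorem card_quotient_map_maximalIdeal (R S : Type*) [CommRing R] [CommRing S] [Algebra R S]
    [IsLocalRing R] [Module.Finite R S] [Module.Free R S] :
    Nat.card (S ⧸ (IsLocalRing.maximalIdeal R).map (algebraMap R S)) =
      Nat.card (R ⧸ IsLocalRing.maximalIdeal R) ^ Module.finrank R S := by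
  rw [← IsLocalRing.finrank_quotient_map (R := R) (S := S)]
  let := Ideal.Quotient.field (IsLocalRing.maximalIdeal R)
  have : Module.Finite (R ⧸ IsLocalRing.maximalIdeal R)
      (S ⧸ (IsLocalRing.maximalIdeal R).map (algebraMap R S)) :=
    Module.Finite.of_restrictScalars_finite R _ _
  exact Module.natCard_eq_pow_finrank

section Padic

theorem map_algebraMap_maximalIdeal_padicInt (p : ℕ) [Fact p.Prime] (R : Type*) [CommRing R]
    [Algebra ℤ_[p] R] :
    (IsLocalRing.maximalIdeal ℤ_[p]).map (algebraMap ℤ_[p] R) = Ideal.span {(p : R)} := by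
  rw [PadicInt.maximalIdeal_eq_span_p, Ideal.map_span, Set.image_singleton, map_natCast]

variable {p : ℕ} [Fact p.Prime] {F : Type*} [Field F] [Algebra ℚ_[p] F] [Algebra ℤ_[p] F]
  [IsScalarTower ℤ_[p] ℚ_[p] F]

variable (p F) in
theorem injective_algebraMap_padicInt : Function.Injective (algebraMap ℤ_[p] F) := by
  rw [IsScalarTower.algebraMap_eq ℤ_[p] ℚ_[p] F]
  exact (algebraMap ℚ_[p] F).injective.comp (IsFractionRing.injective ℤ_[p] ℚ_[p])

theorem isIntegral_padicInt_iff_spectralNorm_le_one [Algebra.IsAlgebraic ℚ_[p] F] {x : F} :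
    IsIntegral ℤ_[p] x ↔ spectralNorm ℚ_[p] F x ≤ 1 := by
  have hx : IsIntegral ℚ_[p] x := (Algebra.IsAlgebraic.isAlgebraic x).isIntegral
  rw [spectralNorm, spectralValue_le_one_iff (minpoly.monic hx)]
  constructor
  · intro h n
    rw [minpoly.isIntegrallyClosed_eq_field_fractions' ℚ_[p] h, Polynomial.coeff_map]
    exact PadicInt.norm_le_one _
  · intro h
    have hlifts : minpoly ℚ_[p] x ∈ Polynomial.lifts (algebraMap ℤ_[p] ℚ_[p]) :=
      (Polynomial.lifts_iff_coeff_lifts _).2 fun n ↦ ⟨⟨_, h n⟩, rfl⟩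
    obtain ⟨q, hq, -, hmonic⟩ :=
      Polynomial.lifts_and_degree_eq_and_monic hlifts (minpoly.monic hx)
    refine ⟨q, hmonic, ?_⟩
    rw [← Polynomial.aeval_def, ← Polynomial.aeval_map_algebraMap ℚ_[p], hq, minpoly.aeval]

variable [FiniteDimensional ℚ_[p] F]

instance finite_integralClosure_padicInt : Module.Finite ℤ_[p] (integralClosure ℤ_[p] F) :=
  IsIntegralClosure.finite ℤ_[p] ℚ_[p] F (integralClosure ℤ_[p] F)

instance free_integralClosure_padicInt : Module.Free ℤ_[p] (integralClosure ℤ_[p] F) :=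
  have := Module.isTorsionFree_iff_algebraMap_injective.2 (injective_algebraMap_padicInt p F)
  IsIntegralClosure.module_free ℤ_[p] ℚ_[p] F (integralClosure ℤ_[p] F)

instance isAdicComplete_integralClosure_padicInt :
    IsAdicComplete (Ideal.span {(p : integralClosure ℤ_[p] F)}) (integralClosure ℤ_[p] F) := by
  rw [← map_algebraMap_maximalIdeal_padicInt, IsAdicComplete.map_algebraMap_iff]
  exact isAdicComplete_of_finite_of_free _

variable (p F) in
theorem card_integralClosure_padicInt_quotient :
    Nat.card (integralClosure ℤ_[p] F ⧸ Ideal.span {(p : integralClosure ℤ_[p] F)}) =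
      p ^ Module.finrank ℚ_[p] F := by
  have hk : Nat.card (ℤ_[p] ⧸ IsLocalRing.maximalIdeal ℤ_[p]) = p :=
    (Nat.card_congr PadicInt.residueField.toEquiv).trans (Nat.card_zmod p)
  have := Module.isTorsionFree_iff_algebraMap_injective.2 (injective_algebraMap_padicInt p F)
  rw [← map_algebraMap_maximalIdeal_padicInt, card_quotient_map_maximalIdeal, hk,
    IsIntegralClosure.rank ℤ_[p] ℚ_[p] F]

instance valuationRing_integralClosure_padicInt : ValuationRing (integralClosure ℤ_[p] F) := by
  have := integralClosure.isFractionRing_of_finite_extension ℚ_[p] F (A := ℤ_[p])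
  rw [ValuationRing.iff_isInteger_or_isInteger _ F]
  intro x
  have hlift {y : F} (hy : spectralNorm ℚ_[p] F y ≤ 1) :
      IsLocalization.IsInteger (integralClosure ℤ_[p] F) y :=
    ⟨⟨y, isIntegral_padicInt_iff_spectralNorm_le_one.2 hy⟩, rfl⟩
  refine (le_total (spectralNorm ℚ_[p] F x) 1).imp hlift fun hx ↦ hlift ?_
  rw [← spectralMulAlgNorm_def, map_inv₀]
  exact inv_le_one_of_one_le₀ hx

instance isDiscreteValuationRing_integralClosure_padicInt :
    IsDiscreteValuationRing (integralClosure ℤ_[p] F) := by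
  have := integralClosure.isDedekindDomain ℤ_[p] ℚ_[p] F
  have hinj : Function.Injective (algebraMap ℤ_[p] (integralClosure ℤ_[p] F)) :=
    .of_comp (f := algebraMap (integralClosure ℤ_[p] F) F) (injective_algebraMap_padicInt p F)
  have hfield : ¬ IsField (integralClosure ℤ_[p] F) := fun h ↦
    IsDiscreteValuationRing.not_isField ℤ_[p] (isField_of_isIntegral_of_isField hinj h)
  have hiff := (IsDiscreteValuationRing.TFAE (integralClosure ℤ_[p] F) hfield).out 0 1
  exact hiff.2 inferInstance

end Padic

theorem index_square_units_of_padic_two (F : Type*) [Field F] [Algebra ℚ_[2] F]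
    [FiniteDimensional ℚ_[2] F] :
    (Subgroup.square Fˣ).index = 2 ^ (Module.finrank ℚ_[2] F + 2) := by
  let : Algebra ℤ_[2] F := ((algebraMap ℚ_[2] F).comp (algebraMap ℤ_[2] ℚ_[2])).toAlgebra
  have : IsScalarTower ℤ_[2] ℚ_[2] F := .of_algebraMap_eq fun _ ↦ rfl
  let O := integralClosure ℤ_[2] F
  have := integralClosure.isFractionRing_of_finite_extension ℚ_[2] F (A := ℤ_[2])
  have : IsAdicComplete (Ideal.span {(2 : O)}) O := isAdicComplete_integralClosure_padicInt
  have hcard : Nat.card (O ⧸ Ideal.span {(2 : O)}) = 2 ^ Module.finrank ℚ_[2] F :=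
    card_integralClosure_padicInt_quotient 2 F
  have : Finite (O ⧸ Ideal.span {(2 : O)}) :=
    Nat.finite_of_card_ne_zero (hcard ▸ pow_ne_zero _ two_ne_zero)
  have := charZero_of_injective_algebraMap (algebraMap ℚ_[2] F).injective
  rw [index_square_units_fractionRing O F, index_square_units_of_henselianRing two_ne_zero, hcard]
  ring

section Kummer

theorem neZero_two_of_algebra (F K : Type*) [Field F] [NeZero (2 : F)] [Field K] [Algebra F K] :
    NeZero (2 : K) :=
  ⟨fun h ↦ two_ne_zero ((algebraMap F K).injective (by rw [map_ofNat, map_zero, h]) : (2 : F) = 0)⟩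

theorem isSquare_units_val_iff {G₀ : Type*} [GroupWithZero G₀] {u : G₀ˣ} :
    IsSquare (u : G₀) ↔ IsSquare u := by
  refine ⟨fun ⟨b, hb⟩ ↦ ?_, fun h ↦ h.map (Units.coeHom G₀)⟩
  have hb0 : b ≠ 0 := by
    rintro rfl
    exact u.ne_zero (hb.trans (mul_zero 0))
  exact ⟨Units.mk0 b hb0, Units.ext hb⟩

/-- The units of `F` that become squares in `K`: the subgroup of `Fˣ` that Kummer theory attaches to
a quadratic extension `K = F(√a)`, where it is generated by `a` and the squares. -/
def kummerGroup (F K : Type*) [Field F] [Field K] [Algebra F K] : Subgroup Fˣ :=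
  (Subgroup.square Kˣ).comap (Units.map (algebraMap F K : F →* K))

/-- The norm of `K / F` as a homomorphism of unit groups. -/
noncomputable abbrev unitsNorm (F K : Type*) [Field F] [Field K] [Algebra F K] : Kˣ →* Fˣ :=
  Units.map (Algebra.norm F)

/-- The subgroup of norms from `Kˣ`; for a local field it is the subgroup attached to `K` by class
field theory. -/
noncomputable def normGroup (F K : Type*) [Field F] [Field K] [Algebra F K] : Subgroup Fˣ :=
  (unitsNorm F K).range

variable {F K : Type*} [Field F] [Field K] [Algebra F K]

theorem mem_kummerGroup {a : Fˣ} : a ∈ kummerGroup F K ↔ ∃ s : K, s ^ 2 = algebraMap F K a := by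
  rw [kummerGroup, Subgroup.mem_comap, Subgroup.mem_square, ← isSquare_units_val_iff,
    isSquare_iff_exists_sq]
  simp only [Units.coe_map, MonoidHom.coe_coe, eq_comm]

variable (F K) in
theorem square_le_kummerGroup : Subgroup.square Fˣ ≤ kummerGroup F K :=
  fun _ hu ↦ Subgroup.mem_square.2 ((Subgroup.mem_square.1 hu).map _)

theorem notMem_range_of_sq_eq {a : Fˣ} (ha : a ∉ Subgroup.square Fˣ) {s : K}
    (hs : s ^ 2 = algebraMap F K a) : s ∉ (algebraMap F K).range := by
  rintro ⟨b, rfl⟩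
  rw [← map_pow] at hs
  exact ha (Subgroup.mem_square.2 (isSquare_units_val_iff.1
    ⟨b, by rw [← (algebraMap F K).injective hs, pow_two]⟩))

theorem linearIndependent_one_of_notMem_range {x : K} (hx : x ∉ (algebraMap F K).range) :
    LinearIndependent F ![1, x] := by
  rw [LinearIndependent.pair_iff' one_ne_zero]
  exact fun b hb ↦ hx ⟨b, by rw [← hb, Algebra.algebraMap_eq_smul_one]⟩

theorem eq_and_eq_of_add_mul_eq {x : K} (hx : x ∉ (algebraMap F K).range) {p q p' q' : F}
    (h : algebraMap F K p + algebraMap F K q * x = algebraMap F K p' + algebraMap F K q' * x) :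
    p = p' ∧ q = q' := by
  have hzero : (p - p') • (1 : K) + (q - q') • x = 0 := by
    rw [Algebra.smul_def, Algebra.smul_def, map_sub, map_sub]
    linear_combination h
  have hli := linearIndependent_one_of_notMem_range hx
  exact (LinearIndependent.pair_iff.1 hli _ _ hzero).imp sub_eq_zero.1 sub_eq_zero.1

-- Hilbert 90 for `x / c`, with the explicit witness `x + c` (or `s` when `x = -c`).
theorem exists_mul_conj_eq_mul {s : K} (hs : s ≠ 0) {σ : K ≃ₐ[F] K} (hσ : σ s = -s) {x : K} {c : F}
    (hx : x * σ x = algebraMap F K c ^ 2) : ∃ z : Kˣ, x * σ z = algebraMap F K c * z := by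
  by_cases h : x + algebraMap F K c = 0
  · refine ⟨Units.mk0 s hs, ?_⟩
    rw [Units.val_mk0, hσ]
    linear_combination -s * h
  · refine ⟨Units.mk0 _ h, ?_⟩
    rw [Units.val_mk0, map_add, AlgEquiv.commutes]
    linear_combination hx

variable [Algebra.IsQuadraticExtension F K]

theorem exists_eq_add_mul {x : K} (hx : x ∉ (algebraMap F K).range) (y : K) :
    ∃ p q : F, y = algebraMap F K p + algebraMap F K q * x := by
  have htop := (linearIndependent_one_of_notMem_range hx).span_eq_top_of_card_eq_finrank' (by
    rw [Fintype.card_fin, Algebra.IsQuadraticExtension.finrank_eq_two])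
  have hy : y ∈ Submodule.span F (Set.range ![1, x]) := htop ▸ Submodule.mem_top
  simp only [Matrix.range_cons, Matrix.range_empty, Set.union_empty, Set.singleton_union,
    Submodule.mem_span_pair] at hy
  obtain ⟨p, q, rfl⟩ := hy
  exact ⟨p, q, by rw [Algebra.smul_def, Algebra.smul_def, mul_one]⟩

theorem mem_normGroup {u : Fˣ} : u ∈ normGroup F K ↔ ∃ x : K, Algebra.norm F x = u := by
  refine ⟨fun ⟨x, hx⟩ ↦ ⟨x, congrArg Units.val hx⟩, fun ⟨x, hx⟩ ↦ ?_⟩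
  have hx0 : x ≠ 0 := by
    rintro rfl
    exact u.ne_zero (hx.symm.trans (Algebra.norm_zero))
  exact ⟨Units.mk0 x hx0, Units.ext hx⟩

theorem unitsNorm_algebraMap (c : Fˣ) :
    unitsNorm F K (Units.map (algebraMap F K : F →* K) c) = c ^ 2 := by
  ext
  simp [Algebra.norm_algebraMap, Algebra.IsQuadraticExtension.finrank_eq_two]

variable (F K) in
theorem square_le_normGroup : Subgroup.square Fˣ ≤ normGroup F K := fun u hu ↦ by
  obtain ⟨c, rfl⟩ := isSquare_iff_exists_sq _ |>.1 (Subgroup.mem_square.1 hu)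
  exact ⟨_, unitsNorm_algebraMap c⟩

variable [NeZero (2 : F)]

variable (F K) in
theorem exists_mem_kummerGroup_notMem_square :
    ∃ a ∈ kummerGroup F K, a ∉ Subgroup.square Fˣ := by
  have := neZero_two_of_algebra F K
  obtain ⟨x, hx⟩ : ∃ x, x ∉ (algebraMap F K).range := by
    by_contra! hall
    have hbot : (⊥ : Subalgebra F K) = ⊤ := eq_top_iff.2 fun x _ ↦ hall x
    rw [Subalgebra.bot_eq_top_iff_finrank_eq_one,
      Algebra.IsQuadraticExtension.finrank_eq_two] at hbot
    omega
  obtain ⟨p, q, hpq⟩ := exists_eq_add_mul hx (x ^ 2)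
  have hsq : (x - algebraMap F K (q / 2)) ^ 2 = algebraMap F K (p + (q / 2) ^ 2) := by
    simp only [map_add, map_div₀, map_pow, map_ofNat]
    field_simp
    linear_combination 4 * hpq
  have hsx : x - algebraMap F K (q / 2) ∉ (algebraMap F K).range := fun h ↦
    hx (by simpa using add_mem h (RingHom.mem_range_self (algebraMap F K) (q / 2)))
  have hns : ¬ IsSquare (p + (q / 2) ^ 2) := by
    rintro ⟨b, hb⟩
    rw [hb, ← pow_two, map_pow, sq_eq_sq_iff_eq_or_eq_neg, ← map_neg] at hsq
    obtain h | h := hsq <;> exact hsx ⟨_, h.symm⟩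
  have h0 : p + (q / 2) ^ 2 ≠ 0 := fun h ↦ hns (h ▸ IsSquare.zero)
  exact ⟨Units.mk0 _ h0, mem_kummerGroup.2 ⟨_, hsq⟩, fun h ↦
    hns (isSquare_units_val_iff.2 (Subgroup.mem_square.1 h))⟩

variable (F K) in
theorem isGalois_of_isQuadraticExtension : IsGalois F K := by
  have : Algebra.IsSeparable F K := by
    refine ⟨fun x ↦ ?_⟩
    have hint : IsIntegral F x := Algebra.IsIntegral.isIntegral x
    refine (Polynomial.separable_iff_derivative_ne_zero (minpoly.irreducible hint)).2 fun h ↦ ?_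
    have hpos := minpoly.natDegree_pos hint
    have hcoeff : (((minpoly F x).natDegree : ℕ) : F) = 0 := by
      have := congrArg (Polynomial.coeff · ((minpoly F x).natDegree - 1)) h
      rwa [Polynomial.coeff_derivative, Polynomial.coeff_zero, Nat.sub_add_cancel hpos,
        (minpoly.monic hint).coeff_natDegree, one_mul, ← Nat.cast_add_one,
        Nat.sub_add_cancel hpos] at this
    have hle := Algebra.IsQuadraticExtension.finrank_eq_two F K ▸ minpoly.natDegree_le (A := F) x
    interval_cases (minpoly F x).natDegree
    · exact one_ne_zero (Nat.cast_one.symm.trans hcoeff)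
    · exact two_ne_zero (Nat.cast_ofNat.symm.trans hcoeff)
  infer_instance

theorem mem_kummerGroup_iff_of_notMem_square {a : Fˣ} (ha : a ∈ kummerGroup F K)
    (hna : a ∉ Subgroup.square Fˣ) {u : Fˣ} :
    u ∈ kummerGroup F K ↔ u ∈ Subgroup.square Fˣ ∨ u * a ∈ Subgroup.square Fˣ := by
  refine ⟨fun hu ↦ ?_, ?_⟩
  · obtain ⟨s, hs⟩ := mem_kummerGroup.1 ha
    obtain ⟨x, hx⟩ := mem_kummerGroup.1 hu
    have hsF := notMem_range_of_sq_eq hna hs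
    obtain ⟨p, q, rfl⟩ := exists_eq_add_mul hsF x
    have hcoord : algebraMap F K u + algebraMap F K 0 * s =
        algebraMap F K (p ^ 2 + a * q ^ 2) + algebraMap F K (2 * p * q) * s := by
      simp only [map_add, map_mul, map_pow, map_zero, map_ofNat]
      linear_combination -hx + algebraMap F K q ^ 2 * hs
    obtain ⟨hu, hpq⟩ := eq_and_eq_of_add_mul_eq hsF hcoord
    simp only [Subgroup.mem_square, ← isSquare_units_val_iff, Units.val_mul]
    obtain rfl | rfl : p = 0 ∨ q = 0 := by
      simpa [two_ne_zero] using hpq.symm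
    · exact .inr ⟨a * q, by rw [hu]; ring⟩
    · exact .inl ⟨p, by rw [hu]; ring⟩
  · rintro (hu | hua)
    · exact square_le_kummerGroup F K hu
    · exact (Subgroup.mul_mem_cancel_right _ ha).1 (square_le_kummerGroup F K hua)

theorem kummerGroup_le_iff {a : Fˣ} (ha : a ∈ kummerGroup F K) (hna : a ∉ Subgroup.square Fˣ)
    {H : Subgroup Fˣ} (hH : Subgroup.square Fˣ ≤ H) : kummerGroup F K ≤ H ↔ a ∈ H := by
  refine ⟨fun h ↦ h ha, fun haH u hu ↦ ?_⟩
  obtain h | h := (mem_kummerGroup_iff_of_notMem_square ha hna).1 hu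
  · exact hH h
  · exact (Subgroup.mul_mem_cancel_right _ haH).1 (hH h)

variable (F K) in
theorem relIndex_square_kummerGroup : (Subgroup.square Fˣ).relIndex (kummerGroup F K) = 2 := by
  obtain ⟨a, ha, hna⟩ := exists_mem_kummerGroup_notMem_square F K
  refine Subgroup.relIndex_eq_two_iff.2 ⟨a, ha, fun b hb ↦ ?_⟩
  by_cases h : b ∈ Subgroup.square Fˣ
  · exact .inr ⟨h, (Subgroup.mul_mem_cancel_left _ h).not.2 hna⟩
  · exact .inl ⟨((mem_kummerGroup_iff_of_notMem_square ha hna).1 hb).resolve_left h, h⟩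

theorem exists_algEquiv_neg_and_norm_eq {a : Fˣ} (hna : a ∉ Subgroup.square Fˣ) {s : K}
    (hs : s ^ 2 = algebraMap F K a) :
    ∃ σ : K ≃ₐ[F] K, σ s = -s ∧ (∀ τ : K ≃ₐ[F] K, τ = 1 ∨ τ = σ) ∧
      ∀ x, algebraMap F K (Algebra.norm F x) = x * σ x := by
  classical
  have := isGalois_of_isQuadraticExtension F K
  have hcard : Nat.card (K ≃ₐ[F] K) = 2 := by
    rw [IsGalois.card_aut_eq_finrank, Algebra.IsQuadraticExtension.finrank_eq_two]
  obtain ⟨σ, hσ, huniq⟩ := (Nat.card_eq_two_iff' 1).1 hcard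
  have hall (τ : K ≃ₐ[F] K) : τ = 1 ∨ τ = σ := or_iff_not_imp_left.2 (huniq τ)
  refine ⟨σ, ?_, hall, fun x ↦ ?_⟩
  · have hsq : σ s ^ 2 = s ^ 2 := by rw [← map_pow, hs, AlgEquiv.commutes]
    refine (sq_eq_sq_iff_eq_or_eq_neg.1 hsq).resolve_left fun hfix ↦ hσ (AlgEquiv.ext fun x ↦ ?_)
    obtain ⟨p, q, rfl⟩ := exists_eq_add_mul (notMem_range_of_sq_eq hna hs) x
    simp [hfix]
  · have huniv : (Finset.univ : Finset (K ≃ₐ[F] K)) = {1, σ} := by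
      ext τ
      simpa using hall τ
    rw [Algebra.norm_eq_prod_automorphisms, huniv, Finset.prod_pair hσ.symm, AlgEquiv.one_apply]

theorem norm_add_mul {a : Fˣ} (hna : a ∉ Subgroup.square Fˣ) {s : K}
    (hs : s ^ 2 = algebraMap F K a) (p q : F) :
    Algebra.norm F (algebraMap F K p + algebraMap F K q * s) = p ^ 2 - a * q ^ 2 := by
  obtain ⟨σ, hσ, -, hnorm⟩ := exists_algEquiv_neg_and_norm_eq hna hs
  apply (algebraMap F K).injective
  rw [hnorm]
  simp only [map_add, map_mul, hσ, AlgEquiv.commutes, map_sub, map_pow]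
  linear_combination -algebraMap F K q ^ 2 * hs

theorem mem_normGroup_iff_exists_sq_sub {a : Fˣ} (ha : a ∈ kummerGroup F K)
    (hna : a ∉ Subgroup.square Fˣ) {u : Fˣ} :
    u ∈ normGroup F K ↔ ∃ p q : F, (u : F) = p ^ 2 - a * q ^ 2 := by
  obtain ⟨s, hs⟩ := mem_kummerGroup.1 ha
  rw [mem_normGroup]
  constructor
  · rintro ⟨x, hx⟩
    obtain ⟨p, q, rfl⟩ := exists_eq_add_mul (notMem_range_of_sq_eq hna hs) x
    exact ⟨p, q, by rw [← hx, norm_add_mul hna hs]⟩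
  · rintro ⟨p, q, hu⟩
    exact ⟨_, (norm_add_mul hna hs p q).trans hu.symm⟩

theorem neg_mem_normGroup {a : Fˣ} (ha : a ∈ kummerGroup F K) (hna : a ∉ Subgroup.square Fˣ) :
    -a ∈ normGroup F K :=
  (mem_normGroup_iff_exists_sq_sub ha hna).2 ⟨0, 1, by rw [Units.val_neg]; ring⟩

variable (F K) in
theorem kummerGroup_le_normGroup_iff :
    kummerGroup F K ≤ normGroup F K ↔ -1 ∈ normGroup F K := by
  obtain ⟨a, ha, hna⟩ := exists_mem_kummerGroup_notMem_square F K
  have hmul := Subgroup.mul_mem_cancel_left (y := -1) _ (neg_mem_normGroup ha hna)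
  rwa [mul_neg_one, neg_neg, ← kummerGroup_le_iff ha hna (square_le_normGroup F K)] at hmul

theorem mem_normGroup_symm {E : Type*} [Field E] [Algebra F E] [Algebra.IsQuadraticExtension F E]
    {a b : Fˣ} (ha : a ∈ kummerGroup F K) (hna : a ∉ Subgroup.square Fˣ)
    (hb : b ∈ kummerGroup F E) (hnb : b ∉ Subgroup.square Fˣ) (h : a ∈ normGroup F E) :
    b ∈ normGroup F K := by
  obtain ⟨p, q, hpq⟩ := (mem_normGroup_iff_exists_sq_sub hb hnb).1 h
  have hq : q ≠ 0 := by
    rintro rfl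
    exact hna (Subgroup.mem_square.2 (isSquare_units_val_iff.1 ⟨p, by rw [hpq]; ring⟩))
  refine (mem_normGroup_iff_exists_sq_sub ha hna).2 ⟨p / q, q⁻¹, ?_⟩
  field_simp
  linear_combination hpq

variable (F K) in
theorem kummerGroup_le_normGroup_comm (E : Type*) [Field E] [Algebra F E]
    [Algebra.IsQuadraticExtension F E] :
    kummerGroup F K ≤ normGroup F E ↔ kummerGroup F E ≤ normGroup F K := by
  obtain ⟨a, ha, hna⟩ := exists_mem_kummerGroup_notMem_square F K
  obtain ⟨b, hb, hnb⟩ := exists_mem_kummerGroup_notMem_square F E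
  rw [kummerGroup_le_iff ha hna (square_le_normGroup F E),
    kummerGroup_le_iff hb hnb (square_le_normGroup F K)]
  exact ⟨mem_normGroup_symm ha hna hb hnb, mem_normGroup_symm hb hnb ha hna⟩

variable (F K) in
theorem comap_unitsNorm_square :
    (Subgroup.square Fˣ).comap (unitsNorm F K) =
      (Units.map (algebraMap F K : F →* K)).range ⊔ Subgroup.square Kˣ := by
  obtain ⟨a, ha, hna⟩ := exists_mem_kummerGroup_notMem_square F K
  obtain ⟨s, hs⟩ := mem_kummerGroup.1 ha
  obtain ⟨σ, hσ, -, hnorm⟩ := exists_algEquiv_neg_and_norm_eq hna hs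
  refine le_antisymm (fun x hx ↦ ?_) (sup_le ?_ fun x hx ↦ ?_)
  · obtain ⟨c, hc⟩ := isSquare_iff_exists_sq _ |>.1 (Subgroup.mem_square.1 hx)
    have hxc : (x : K) * σ x = algebraMap F K c ^ 2 := by
      rw [← hnorm, ← map_pow, ← Units.val_pow_eq_pow_val, ← hc, Units.coe_map]
    have hs0 : s ≠ 0 := fun h ↦ notMem_range_of_sq_eq hna hs (h ▸ zero_mem _)
    obtain ⟨z, hz⟩ := exists_mul_conj_eq_mul hs0 hσ hxc
    have hxz : x = Units.map (algebraMap F K : F →* K) (c * (unitsNorm F K z)⁻¹) * (z * z) := by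
      rw [map_mul, map_inv, mul_right_comm, eq_mul_inv_iff_mul_eq]
      ext
      simp only [Units.val_mul, Units.coe_map, MonoidHom.coe_coe, hnorm]
      linear_combination (z : K) * hz
    rw [hxz]
    exact Subgroup.mul_mem_sup ⟨_, rfl⟩ ⟨z, rfl⟩
  · rintro _ ⟨c, rfl⟩
    rw [Subgroup.mem_comap, unitsNorm_algebraMap]
    exact IsSquare.sq c
  · exact (Subgroup.mem_square.1 hx).map _

variable (F K) in
theorem relIndex_square_normGroup_mul_index_kummerGroup :
    (Subgroup.square Fˣ).relIndex (normGroup F K) * (kummerGroup F K).index =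
      (Subgroup.square Kˣ).index := by
  rw [normGroup, ← Subgroup.index_comap, comap_unitsNorm_square, kummerGroup, Subgroup.index_comap,
    mul_comm, ← Subgroup.relIndex_sup_right]
  exact Subgroup.relIndex_mul_index le_sup_right

open Classical in
variable (F K) in
theorem relIndex_square_normGroup_inf_kummerGroup :
    (Subgroup.square Fˣ).relIndex (normGroup F K ⊓ kummerGroup F K) =
      if kummerGroup F K ≤ normGroup F K then 2 else 1 := by
  split_ifs with h
  · rw [inf_eq_right.2 h, relIndex_square_kummerGroup]
  · have hmul := Subgroup.relIndex_mul_relIndex _ _ _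
      (le_inf (square_le_normGroup F K) (square_le_kummerGroup F K)) inf_le_right
    rw [relIndex_square_kummerGroup, Subgroup.inf_relIndex_right] at hmul
    exact (Nat.prime_mul_iff.1 (hmul ▸ Nat.prime_two)).elim
      (fun hprime ↦ absurd (Subgroup.relIndex_eq_one.1 hprime.2) h) (·.2)

open Classical in
variable (F K) in
theorem relIndex_square_comap_unitsNorm_kummerGroup :
    (Subgroup.square Kˣ).relIndex ((kummerGroup F K).comap (unitsNorm F K)) =
      (kummerGroup F K).index * if kummerGroup F K ≤ normGroup F K then 2 else 1 := by
  have hsq : Subgroup.square Kˣ ≤ (Subgroup.square Fˣ).comap (unitsNorm F K) :=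
    comap_unitsNorm_square F K ▸ le_sup_right
  have hindex : (Subgroup.square Kˣ).relIndex ((Subgroup.square Fˣ).comap (unitsNorm F K)) =
      (kummerGroup F K).index := by
    rw [comap_unitsNorm_square, Subgroup.relIndex_sup_right, kummerGroup, Subgroup.index_comap]
  rw [← Subgroup.relIndex_mul_relIndex _ _ _ hsq
    (Subgroup.comap_mono (square_le_kummerGroup F K)), hindex, Subgroup.relIndex_comap,
    Subgroup.map_comap_eq, ← normGroup, relIndex_square_normGroup_inf_kummerGroup]

end Kummer

section Counting

theorem card_eq_of_forall_existsUnique {α β : Type*} (R : α → β → Prop)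
    (hα : ∀ a, ∃! b, R a b) (hβ : ∀ b, ∃! a, R a b) : Nat.card α = Nat.card β := by
  choose f hf hf' using hα
  refine Nat.card_eq_of_bijective f ⟨fun a a' h ↦ ?_, fun b ↦ ?_⟩
  · exact (hβ (f a)).unique (hf a) (h ▸ hf a')
  · obtain ⟨a, ha, -⟩ := hβ b
    exact ⟨a, (hf' a b ha).symm⟩

theorem existsUnique_mem_ne_one_of_card_eq_two {G : Type*} [Group G] {S : Subgroup G}
    (hS : Nat.card S = 2) : ∃! x, x ∈ S ∧ x ≠ 1 := by
  obtain ⟨x, hx, hunique⟩ := (Nat.card_eq_two_iff' (1 : S)).1 hS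
  exact ⟨x, ⟨x.2, fun h ↦ hx (Subtype.ext h)⟩, fun y ⟨hyS, hy⟩ ↦
    congrArg Subtype.val (hunique ⟨y, hyS⟩ fun h ↦ hy (congrArg Subtype.val h))⟩

theorem orderOf_eq_two_of_mem_ne_one {G : Type*} [Group G] {S : Subgroup G}
    (hS : Nat.card S = 2) {x : G} (hxS : x ∈ S) (hx : x ≠ 1) : orderOf x = 2 :=
  orderOf_eq_prime (hS ▸ congrArg Subtype.val (pow_card_eq_one' (x := (⟨x, hxS⟩ : S)))) hx

theorem card_subgroup_card_eq_two_eq_card_orderOf_eq_two (G : Type*) [Group G] :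
    Nat.card {S : Subgroup G // Nat.card S = 2} = Nat.card {x : G // orderOf x = 2} := by
  refine card_eq_of_forall_existsUnique (fun S x ↦ (x : G) ∈ (S : Subgroup G))
    (fun ⟨S, hS⟩ ↦ ?_) (fun ⟨x, hx⟩ ↦ ?_)
  · obtain ⟨x, ⟨hxS, hx⟩, hunique⟩ := existsUnique_mem_ne_one_of_card_eq_two hS
    refine ⟨⟨x, orderOf_eq_two_of_mem_ne_one hS hxS hx⟩, hxS, fun ⟨y, hy⟩ hyS ↦ ?_⟩
    exact Subtype.ext (hunique y ⟨hyS, by rintro rfl; simp at hy⟩)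
  · have hcard : Nat.card (Subgroup.zpowers x) = 2 := by rw [Nat.card_zpowers, hx]
    refine ⟨⟨Subgroup.zpowers x, hcard⟩, Subgroup.mem_zpowers x, fun ⟨S, hS⟩ hxS ↦ ?_⟩
    have := Nat.finite_of_card_ne_zero (hS ▸ two_ne_zero)
    exact Subtype.ext (Subgroup.eq_of_le_of_card_ge (Subgroup.zpowers_le.2 hxS)
      (hS.trans hcard.symm).le).symm

theorem card_subgroup_card_eq_two_of_card_eq_four {G : Type*} [Group G] (hG : Nat.card G = 4) :
    Nat.card {S : Subgroup G // Nat.card S = 2} = 1 ∨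
      Nat.card {S : Subgroup G // Nat.card S = 2} = 3 := by
  classical
  have := Nat.finite_of_card_ne_zero (hG ▸ four_ne_zero)
  rw [card_subgroup_card_eq_two_eq_card_orderOf_eq_two]
  by_cases hcyc : IsCyclic G
  · have := Fintype.ofFinite G
    left
    rw [Nat.card_eq_fintype_card, Fintype.card_subtype,
      IsCyclic.card_orderOf_eq_totient (by rw [← Nat.card_eq_fintype_card, hG]; norm_num),
      Nat.totient_two]
  · right
    have horder (x : G) : orderOf x = 2 ↔ x ∈ Set.univ \ {1} := by
      have hne_four : orderOf x ≠ 4 := fun h ↦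
        hcyc (isCyclic_of_orderOf_eq_card x (h.trans hG.symm))
      have hdvd : orderOf x ∈ Nat.divisors 4 := Nat.mem_divisors.2
        ⟨hG ▸ orderOf_dvd_natCard x, four_ne_zero⟩
      rw [show Nat.divisors 4 = {1, 2, 4} from rfl] at hdvd
      simp only [Finset.mem_insert, Finset.mem_singleton, hne_four, or_false] at hdvd
      rw [Set.mem_sdiff, Set.mem_singleton_iff, ← orderOf_eq_one_iff]
      simp only [Set.mem_univ, true_and]
      omega
    rw [Nat.card_congr (Equiv.subtypeEquivRight horder), Nat.card_coe_set_eq,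
      Set.ncard_sdiff_singleton_of_mem (Set.mem_univ _), Set.ncard_univ, hG]

open Finset in
theorem three_mul_card_add_card_mul_card_sub_one {A Q : Type*} [Finite A] [Fintype Q]
    {R : Q → A → Prop} (hA : ∀ L, Nat.card {K // R K L} = 1 ∨ Nat.card {K // R K L} = 3)
    (hQ : ∀ K₁ K₂, K₁ ≠ K₂ → ∃! L, R K₁ L ∧ R K₂ L) :
    3 * Nat.card A + Nat.card Q * (Nat.card Q - 1) = 3 * ∑ K, Nat.card {L // R K L} := by
  classical
  have := Fintype.ofFinite A
  simp only [Nat.card_eq_fintype_card, Fintype.card_subtype] at hA ⊢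
  have hpairs : ∑ L, #({K | R K L} : Finset Q).offDiag = #(univ : Finset Q).offDiag := by
    have hcount := sum_card_bipartiteAbove_eq_sum_card_bipartiteBelow
      (s := (univ : Finset Q).offDiag) (t := univ) fun p L ↦ R p.1 L ∧ R p.2 L
    have hone (p : Q × Q) (hp : p ∈ (univ : Finset Q).offDiag) :
        #(univ.bipartiteAbove (fun p L ↦ R p.1 L ∧ R p.2 L) p) = 1 := by
      obtain ⟨L, hL, hunique⟩ := hQ p.1 p.2 (mem_offDiag.1 hp).2.2
      refine card_eq_one.2 ⟨L, eq_singleton_iff_unique_mem.2 ⟨by simpa using hL, fun L' hL' ↦ ?_⟩⟩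
      exact hunique L' (by simpa using hL')
    rw [sum_congr rfl hone, ← card_eq_sum_ones] at hcount
    rw [hcount]
    refine sum_congr rfl fun L _ ↦ congrArg card ?_
    ext p
    simp only [mem_offDiag, mem_filter, bipartiteBelow, mem_univ]
    tauto
  have hthree (L : A) : 3 + #({K | R K L} : Finset Q).offDiag = 3 * #{K | R K L} := by
    rw [offDiag_card]
    obtain h | h := hA L <;> rw [h]
  calc 3 * Fintype.card A + Fintype.card Q * (Fintype.card Q - 1)
      = ∑ L : A, (3 + #({K | R K L} : Finset Q).offDiag) := by
        rw [sum_add_distrib, hpairs, offDiag_card, sum_const, card_univ, card_univ, smul_eq_mul,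
          mul_comm 3, Nat.mul_sub_one]
    _ = 3 * ∑ K, #{L | R K L} := by
        simp only [hthree, ← mul_sum]
        exact congrArg (3 * ·) (sum_card_bipartiteAbove_eq_sum_card_bipartiteBelow R).symm

theorem finite_of_forall_finite_of_forall_nonempty {A Q : Type*} [Finite Q] {R : Q → A → Prop}
    (hfinite : ∀ K, Finite {L // R K L}) (hnonempty : ∀ L, Nonempty {K // R K L}) : Finite A := by
  refine Finite.of_surjective (fun p : Σ K, {L // R K L} ↦ p.2.1) fun L ↦ ?_
  obtain ⟨K, hK⟩ := hnonempty L
  exact ⟨⟨K, L, hK⟩, rfl⟩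

theorem sum_add_card_of_add_one_eq {Q : Type*} [Fintype Q] (P : Q → Prop) [DecidablePred P]
    {f : Q → ℕ} {t : ℕ} (hf : ∀ K, f K + 1 = t + if P K then t else 0) :
    ∑ K, f K + Nat.card Q = (Nat.card Q + Nat.card {K // P K}) * t := by
  have hsum : ∑ K, (f K + 1) = ∑ K, (t + if P K then t else 0) :=
    Finset.sum_congr rfl fun K _ ↦ hf K
  rw [Finset.sum_add_distrib, Finset.sum_add_distrib, ← Finset.sum_filter] at hsum
  simp only [Finset.sum_const, smul_eq_mul, mul_one, Finset.card_univ] at hsum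
  rw [Nat.card_eq_fintype_card, Nat.card_eq_fintype_card, Fintype.card_subtype, hsum, add_mul]

theorem three_mul_card_of_card_add_one_eq {A Q : Type*} (R : Q → A → Prop) (P : Q → Prop)
    [DecidablePred P] {t : ℕ} (ht : 1 < t) (hcardQ : Nat.card Q = 2 * t - 1)
    (hP : Nat.card {K // P K} = t - 1)
    (hR : ∀ K, Nat.card {L // R K L} + 1 = t + if P K then t else 0)
    (hA : ∀ L, Nat.card {K // R K L} = 1 ∨ Nat.card {K // R K L} = 3)
    (hQ : ∀ K₁ K₂, K₁ ≠ K₂ → ∃! L, R K₁ L ∧ R K₂ L) :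
    3 * Nat.card A = (t - 1) * (5 * t - 1) := by
  have : Finite Q := Nat.finite_of_card_ne_zero (by omega)
  have := Fintype.ofFinite Q
  have : Finite A := finite_of_forall_finite_of_forall_nonempty (R := R)
    (fun K ↦ Nat.finite_of_card_ne_zero (by have := hR K; omega))
    (fun L ↦ (Nat.card_ne_zero.1 (by have := hA L; omega)).1)
  have hsum := sum_add_card_of_add_one_eq P hR
  have hcount := three_mul_card_add_card_mul_card_sub_one hA hQ
  obtain ⟨u, rfl⟩ : ∃ u, t = u + 1 := ⟨t - 1, by omega⟩
  have h₁ : 2 * (u + 1) - 1 = 2 * u + 1 := by omega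
  have h₂ : 5 * (u + 1) - 1 = 5 * u + 4 := by omega
  rw [hcardQ, h₁, Nat.add_sub_cancel] at hcount
  rw [hcardQ, hP, h₁, Nat.add_sub_cancel] at hsum
  rw [h₂, Nat.add_sub_cancel]
  linarith

end Counting

section QuadraticSubfields

open IntermediateField

variable {K Ω : Type*} [Field K] [Field Ω] [Algebra K Ω]

theorem mem_kummerGroup_coe {L : IntermediateField K Ω} {a : Kˣ} :
    a ∈ kummerGroup K L ↔ ∃ s ∈ L, s ^ 2 = algebraMap K Ω a := by
  rw [mem_kummerGroup]
  exact ⟨fun ⟨s, hs⟩ ↦ ⟨s, s.2, congrArg Subtype.val hs⟩, fun ⟨s, hsL, hs⟩ ↦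
    ⟨⟨s, hsL⟩, Subtype.ext hs⟩⟩

theorem finrank_adjoin_simple_of_sq_eq {a : Kˣ} (ha : a ∉ Subgroup.square Kˣ) {s : Ω}
    (hs : s ^ 2 = algebraMap K Ω a) : Module.finrank K K⟮s⟯ = 2 := by
  have hirr : Irreducible (Polynomial.X ^ 2 - Polynomial.C (a : K)) := by
    rw [X_pow_sub_C_irreducible_iff_of_prime Nat.prime_two]
    exact fun b hb ↦ ha (Subgroup.mem_square.2
      (isSquare_units_val_iff.1 ⟨b, by rw [← hb, pow_two]⟩))
  have hmonic : (Polynomial.X ^ 2 - Polynomial.C (a : K)).Monic :=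
    Polynomial.monic_X_pow_sub_C _ two_ne_zero
  have hroot : Polynomial.aeval s (Polynomial.X ^ 2 - Polynomial.C (a : K)) = 0 := by simp [hs]
  rw [adjoin.finrank ⟨_, hmonic, hroot⟩, ← minpoly.eq_of_irreducible_of_monic hirr hroot hmonic,
    Polynomial.natDegree_X_pow_sub_C]

theorem existsUnique_mem_kummerGroup [IsAlgClosed Ω] {a : Kˣ} (ha : a ∉ Subgroup.square Kˣ) :
    ∃! L : IntermediateField K Ω, Module.finrank K L = 2 ∧ a ∈ kummerGroup K L := by
  obtain ⟨s, hs⟩ := IsAlgClosed.exists_pow_nat_eq (algebraMap K Ω a) two_pos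
  have hfinrank := finrank_adjoin_simple_of_sq_eq ha hs
  refine ⟨K⟮s⟯, ⟨hfinrank, mem_kummerGroup_coe.2 ⟨s, mem_adjoin_simple_self K s, hs⟩⟩, ?_⟩
  rintro L ⟨hL, haL⟩
  obtain ⟨t, htL, ht⟩ := mem_kummerGroup_coe.1 haL
  have hsL : s ∈ L := by
    obtain rfl | rfl := sq_eq_sq_iff_eq_or_eq_neg.1 (hs.trans ht.symm)
    exacts [htL, neg_mem htL]
  have := Module.finite_of_finrank_pos (hL ▸ two_pos)
  exact (eq_of_le_of_finrank_eq (adjoin_simple_le_iff.2 hsL) (hfinrank.trans hL.symm)).symm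

theorem card_kummerGroup_le [NeZero (2 : K)] [IsAlgClosed Ω] {H : Subgroup Kˣ}
    (hH : Subgroup.square Kˣ ≤ H) :
    Nat.card {L : IntermediateField K Ω // Module.finrank K L = 2 ∧ kummerGroup K L ≤ H} =
      (Subgroup.square Kˣ).relIndex H - 1 := by
  let π := QuotientGroup.mk' (Subgroup.square Kˣ)
  have hker : π.ker = Subgroup.square Kˣ := QuotientGroup.ker_mk' _
  have hπ {a : Kˣ} {J : Subgroup Kˣ} (hJ : Subgroup.square Kˣ ≤ J) : π a ∈ J.map π ↔ a ∈ J := by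
    rw [← Subgroup.mem_comap, Subgroup.comap_map_eq_self (hker.trans_le hJ)]
  have hπ_one {a : Kˣ} : π a ≠ 1 ↔ a ∉ Subgroup.square Kˣ := (QuotientGroup.eq_one_iff a).not
  have hcard (J : Subgroup Kˣ) : Nat.card (J.map π) = (Subgroup.square Kˣ).relIndex J := by
    rw [← Subgroup.relIndex_ker, hker]
  calc _ = Nat.card ↥(H.map π \ {1} : Set (Kˣ ⧸ Subgroup.square Kˣ)) := ?_
    _ = _ := by
      rw [Nat.card_coe_set_eq, Set.ncard_sdiff_singleton_of_mem (one_mem (H.map π)), ← hcard]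
      rfl
  refine card_eq_of_forall_existsUnique (fun L x ↦ ↑x ∈ (kummerGroup K L.1).map π)
    (fun ⟨L, hL, hLH⟩ ↦ ?_) (fun ⟨x, hxH, hx⟩ ↦ ?_)
  · have : Algebra.IsQuadraticExtension K L := ⟨hL⟩
    obtain ⟨x, ⟨hxL, hx⟩, hunique⟩ := existsUnique_mem_ne_one_of_card_eq_two
      ((hcard _).trans (relIndex_square_kummerGroup K L))
    exact ⟨⟨x, Subgroup.map_mono hLH hxL, hx⟩, hxL, fun y hy ↦ Subtype.ext (hunique y ⟨hy, y.2.2⟩)⟩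
  · obtain ⟨a, haH, rfl⟩ := hxH
    have ha : a ∉ Subgroup.square Kˣ := hπ_one.1 hx
    obtain ⟨L, ⟨hL, haL⟩, hunique⟩ := existsUnique_mem_kummerGroup (Ω := Ω) ha
    have : Algebra.IsQuadraticExtension K L := ⟨hL⟩
    refine ⟨⟨L, hL, (kummerGroup_le_iff haL ha hH).2 haH⟩, Subgroup.mem_map_of_mem π haL, ?_⟩
    exact fun M hM ↦ Subtype.ext (hunique M ⟨M.2.1, (hπ (square_le_kummerGroup K M.1)).1 hM⟩)

end QuadraticSubfields

section NormalTower

variable {F K Ω : Type*} [Field F] [Field K] [Field Ω] [Algebra F K] [Algebra F Ω] [Algebra K Ω]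
  [IsScalarTower F K Ω] [Normal F Ω]

theorem normal_restrictScalars_iff_forall_map_mem_kummerGroup [NeZero (2 : K)] [Normal F K]
    (L : IntermediateField K Ω) [Algebra.IsQuadraticExtension K L] :
    Normal F (L.restrictScalars F) ↔
      ∀ σ : K ≃ₐ[F] K, ∀ a ∈ kummerGroup K L, Units.map (σ : K →* K) a ∈ kummerGroup K L := by
  have hsq (τ : Ω ≃ₐ[F] Ω) {a : K} {s : Ω} (hs : s ^ 2 = algebraMap K Ω a) :
      τ s ^ 2 = algebraMap K Ω (τ.restrictNormal K a) := by
    rw [← map_pow, hs, AlgEquiv.restrictNormal_commutes]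
  rw [IntermediateField.normal_iff_forall_map_le']
  constructor
  · rintro hL σ a ha
    obtain ⟨s, hsL, hs⟩ := mem_kummerGroup_coe.1 ha
    obtain ⟨τ, rfl⟩ := AlgEquiv.restrictNormalHom_surjective (F := F) (K₁ := K) Ω σ
    exact mem_kummerGroup_coe.2 ⟨τ s, hL τ ⟨s, hsL, rfl⟩, hsq τ hs⟩
  · rintro hL τ _ ⟨x, hx, rfl⟩
    obtain ⟨a, haL, ha⟩ := exists_mem_kummerGroup_notMem_square K L
    obtain ⟨s, hs⟩ := mem_kummerGroup.1 haL
    obtain ⟨p, q, hpq⟩ := exists_eq_add_mul (notMem_range_of_sq_eq ha hs) (⟨x, hx⟩ : L)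
    have hτK (p : K) : τ (algebraMap K Ω p) ∈ L := by
      rw [← AlgEquiv.restrictNormal_commutes]
      exact L.algebraMap_mem _
    have hτs : τ s ∈ L := by
      obtain ⟨t, htL, ht⟩ := mem_kummerGroup_coe.1 (hL (τ.restrictNormal K) a haL)
      obtain h | h := sq_eq_sq_iff_eq_or_eq_neg.1 ((hsq τ (congrArg Subtype.val hs)).trans ht.symm)
      · exact h ▸ htL
      · exact h ▸ neg_mem htL
    have hx' : x = algebraMap K Ω p + algebraMap K Ω q * s := congrArg Subtype.val hpq
    change τ x ∈ L
    rw [hx', map_add, map_mul]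
    exact add_mem (hτK p) (mul_mem (hτK q) hτs)

theorem normal_restrictScalars_iff_kummerGroup_le [NeZero (2 : F)]
    [Algebra.IsQuadraticExtension F K] (L : IntermediateField K Ω)
    [Algebra.IsQuadraticExtension K L] :
    Normal F (L.restrictScalars F) ↔
      kummerGroup K L ≤ (kummerGroup F K).comap (unitsNorm F K) := by
  have := neZero_two_of_algebra F K
  obtain ⟨d, hdK, hd⟩ := exists_mem_kummerGroup_notMem_square F K
  obtain ⟨t, ht⟩ := mem_kummerGroup.1 hdK
  obtain ⟨σ, -, hall, hnorm⟩ := exists_algEquiv_neg_and_norm_eq hd ht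
  have hnorm' (a : Kˣ) : a ∈ (kummerGroup F K).comap (unitsNorm F K) ↔
      Units.map (σ : K →* K) a * a ∈ Subgroup.square Kˣ := by
    have : Units.map (algebraMap F K : F →* K) (unitsNorm F K a) = Units.map (σ : K →* K) a * a :=
      Units.ext ((hnorm a).trans (mul_comm _ _))
    rw [Subgroup.mem_comap, kummerGroup, Subgroup.mem_comap, this]
  have hconj (u : Kˣ) (hu : u ∈ kummerGroup K L) :
      Units.map (σ : K →* K) u ∈ kummerGroup K L ↔
        Units.map (σ : K →* K) u * u ∈ Subgroup.square Kˣ := by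
    refine ⟨fun h ↦ ?_, fun h ↦
      (Subgroup.mul_mem_cancel_right _ hu).1 (square_le_kummerGroup K L h)⟩
    by_cases husq : IsSquare u
    · exact (husq.map _).mul husq
    · refine ((mem_kummerGroup_iff_of_notMem_square hu husq).1 h).resolve_left fun hσu ↦ husq ?_
      rw [Subgroup.mem_square, ← isSquare_units_val_iff] at hσu
      exact isSquare_units_val_iff.1 (by simpa using hσu.map σ.symm)
  rw [normal_restrictScalars_iff_forall_map_mem_kummerGroup]
  refine ⟨fun h u hu ↦ (hnorm' u).2 ((hconj u hu).1 (h σ u hu)), fun h τ u hu ↦ ?_⟩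
  obtain rfl | rfl := hall τ
  · exact hu
  · exact (hconj u hu).2 ((hnorm' u).1 (h hu))

end NormalTower

section Quartic

open IntermediateField

variable {F Ω : Type*} [Field F] [NeZero (2 : F)] [Field Ω] [Algebra F Ω]

theorem card_isGalois_finrank_four_ge [IsAlgClosed Ω] [Normal F Ω] (K : IntermediateField F Ω)
    [Algebra.IsQuadraticExtension F K] :
    Nat.card {L : IntermediateField F Ω // (Module.finrank F L = 4 ∧ IsGalois F L) ∧ K ≤ L} =
      (Subgroup.square Kˣ).relIndex ((kummerGroup F K).comap (unitsNorm F K)) - 1 := by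
  have := neZero_two_of_algebra F K
  have hiff (L : IntermediateField K Ω) :
      Module.finrank F (L.restrictScalars F) = 4 ∧ IsGalois F (L.restrictScalars F) ↔
        Module.finrank K L = 2 ∧ kummerGroup K L ≤ (kummerGroup F K).comap (unitsNorm F K) := by
    have hfinrank : Module.finrank F (L.restrictScalars F) = 4 ↔ Module.finrank K L = 2 := by
      have hmul : _ = Module.finrank F (L.restrictScalars F) := Module.finrank_mul_finrank F K L
      rw [Algebra.IsQuadraticExtension.finrank_eq_two] at hmul
      omega
    refine (and_congr_left' hfinrank).trans (and_congr_right fun hL ↦ ?_)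
    have : Algebra.IsQuadraticExtension K L := ⟨hL⟩
    have := isGalois_of_isQuadraticExtension F K
    have := isGalois_of_isQuadraticExtension K L
    have hsep : Algebra.IsSeparable F (L.restrictScalars F) := Algebra.IsSeparable.trans F K L
    rw [isGalois_iff, and_iff_right hsep, normal_restrictScalars_iff_kummerGroup_le]
  have hsquare : Subgroup.square Kˣ ≤ (kummerGroup F K).comap (unitsNorm F K) := fun u hu ↦
    square_le_kummerGroup F K ((Subgroup.mem_square.1 hu).map _)
  rw [← card_kummerGroup_le (Ω := Ω) hsquare]
  refine (Nat.card_eq_of_bijective (fun L ↦ ⟨L.1.restrictScalars F, (hiff L.1).2 L.2,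
    fun x hx ↦ L.1.algebraMap_mem ⟨x, hx⟩⟩) ⟨fun L L' h ↦ ?_, fun ⟨L, hL, hKL⟩ ↦ ?_⟩).symm
  · exact Subtype.ext (restrictScalars_injective F (congrArg Subtype.val h))
  · exact ⟨⟨extendScalars hKL, (hiff _).1 hL⟩, rfl⟩

theorem existsUnique_isGalois_finrank_four_ge_ge {K₁ K₂ : IntermediateField F Ω}
    [Algebra.IsQuadraticExtension F K₁] [Algebra.IsQuadraticExtension F K₂] (hne : K₁ ≠ K₂) :
    ∃! L : IntermediateField F Ω,
      (Module.finrank F L = 4 ∧ IsGalois F L) ∧ K₁ ≤ L ∧ K₂ ≤ L := by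
  have h₁ := Algebra.IsQuadraticExtension.finrank_eq_two F K₁
  have h₂ := Algebra.IsQuadraticExtension.finrank_eq_two F K₂
  have hgalois₁ := isGalois_of_isQuadraticExtension F K₁
  have hgalois₂ := isGalois_of_isQuadraticExtension F K₂
  have hfinrank : Module.finrank F ↥(K₁ ⊔ K₂) = 4 := by
    have hle : Module.finrank F ↥(K₁ ⊔ K₂) ≤ 4 := by
      simpa only [h₁, h₂] using finrank_sup_le K₁ K₂
    have hdvd : 2 ∣ Module.finrank F ↥(K₁ ⊔ K₂) := h₁ ▸ finrank_dvd_of_le_right le_sup_left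
    have hpos : 0 < Module.finrank F ↥(K₁ ⊔ K₂) := Module.finrank_pos
    have hne_two : Module.finrank F ↥(K₁ ⊔ K₂) ≠ 2 := fun h ↦ hne <|
      (eq_of_le_of_finrank_eq le_sup_left (h₁.trans h.symm)).trans
        (eq_of_le_of_finrank_eq le_sup_right (h₂.trans h.symm)).symm
    omega
  refine ⟨K₁ ⊔ K₂, ⟨⟨hfinrank, inferInstance⟩, le_sup_left, le_sup_right⟩, ?_⟩
  rintro L ⟨⟨hL, -⟩, hL₁, hL₂⟩
  have := Module.finite_of_finrank_pos (hL ▸ four_pos)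
  exact (eq_of_le_of_finrank_eq (sup_le hL₁ hL₂) (hfinrank.trans hL.symm)).symm

end Quartic

section SubfieldsOfQuartic

open IntermediateField

theorem card_finrank_eq_two_of_finrank_eq_four {F L : Type*} [Field F] [Field L] [Algebra F L]
    [IsGalois F L] (hL : Module.finrank F L = 4) :
    Nat.card {K : IntermediateField F L // Module.finrank F K = 2} = 1 ∨
      Nat.card {K : IntermediateField F L // Module.finrank F K = 2} = 3 := by
  have := Module.finite_of_finrank_pos (hL ▸ four_pos)
  have hiff (K : IntermediateField F L) :
      Module.finrank F K = 2 ↔ Nat.card K.fixingSubgroup = 2 := by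
    have hmul := Module.finrank_mul_finrank F K L
    rw [hL] at hmul
    rw [IsGalois.card_fixingSubgroup_eq_finrank]
    constructor <;> intro h <;> rw [h] at hmul <;> omega
  have hcongr : Nat.card {K : IntermediateField F L // Module.finrank F K = 2} =
      Nat.card {S : Subgroup (L ≃ₐ[F] L) // Nat.card S = 2} :=
    Nat.card_congr (Equiv.subtypeEquiv
      (IsGalois.intermediateFieldEquivSubgroup.toEquiv.trans OrderDual.ofDual) hiff)
  rw [hcongr]
  exact card_subgroup_card_eq_two_of_card_eq_four ((IsGalois.card_aut_eq_finrank F L).trans hL)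

theorem card_finrank_eq_two_le {F Ω : Type*} [Field F] [Field Ω] [Algebra F Ω]
    (L : IntermediateField F Ω) (n : ℕ) :
    Nat.card {K : IntermediateField F Ω // Module.finrank F K = n ∧ K ≤ L} =
      Nat.card {K : IntermediateField F L // Module.finrank F K = n} := by
  refine (Nat.card_eq_of_bijective (fun K ↦ ⟨lift K.1,
    (liftAlgEquiv K.1).toLinearEquiv.finrank_eq.symm.trans K.2, lift_le K.1⟩)
    ⟨fun K K' h ↦ ?_, fun ⟨K, hK, hKL⟩ ↦ ?_⟩).symm
  · exact Subtype.ext (lift_injective L (congrArg Subtype.val h))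
  · exact ⟨⟨restrict hKL, (restrictAlgEquiv hKL).toLinearEquiv.finrank_eq.symm.trans hK⟩,
      Subtype.ext (lift_restrict hKL)⟩

end SubfieldsOfQuartic

section QuarticCount

open IntermediateField

variable {F Ω : Type*} [Field F] [NeZero (2 : F)] [Field Ω] [Algebra F Ω] [IsAlgClosed Ω]

theorem index_kummerGroup {K : Type*} [Field K] [Algebra F K] [Algebra.IsQuadraticExtension F K]
    {t : ℕ} (hF : (Subgroup.square Fˣ).index = 2 * t) : (kummerGroup F K).index = t := by
  have hmul := Subgroup.relIndex_mul_index (square_le_kummerGroup F K)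
  rw [relIndex_square_kummerGroup, hF] at hmul
  exact Nat.eq_of_mul_eq_mul_left two_pos hmul

theorem relIndex_square_normGroup {E : Type*} [Field E] [Algebra F E]
    [Algebra.IsQuadraticExtension F E] {t : ℕ} (ht : 0 < t)
    (hF : (Subgroup.square Fˣ).index = 2 * t) (hE : (Subgroup.square Eˣ).index = t * t) :
    (Subgroup.square Fˣ).relIndex (normGroup F E) = t := by
  have hmul := relIndex_square_normGroup_mul_index_kummerGroup F E
  rw [index_kummerGroup hF, hE] at hmul
  exact Nat.eq_of_mul_eq_mul_right ht hmul

theorem kummerGroup_le_normGroup_iff_of_neg_one_mem {K E : Type*} [Field K] [Algebra F K]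
    [Algebra.IsQuadraticExtension F K] [Field E] [Algebra F E] [Algebra.IsQuadraticExtension F E]
    (hE : -1 ∈ kummerGroup F E) (hneg : -1 ∉ Subgroup.square Fˣ) :
    kummerGroup F K ≤ normGroup F K ↔ kummerGroup F K ≤ normGroup F E := by
  rw [kummerGroup_le_normGroup_iff, ← kummerGroup_le_iff hE hneg (square_le_normGroup F K),
    kummerGroup_le_normGroup_comm]

theorem card_finrank_eq_two {t : ℕ} (hF : (Subgroup.square Fˣ).index = 2 * t) :
    Nat.card {K : IntermediateField F Ω // Module.finrank F K = 2} = 2 * t - 1 := by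
  rw [← hF, ← Subgroup.relIndex_top_right, ← card_kummerGroup_le (Ω := Ω) le_top]
  simp only [le_top, and_true]

open Classical in
theorem card_isGalois_finrank_four_ge_add_one [Normal F Ω] {E : Type*} [Field E] [Algebra F E]
    [Algebra.IsQuadraticExtension F E] (hE : -1 ∈ kummerGroup F E)
    (hneg : -1 ∉ Subgroup.square Fˣ) {t : ℕ} (ht : 0 < t)
    (hF : (Subgroup.square Fˣ).index = 2 * t) (K : IntermediateField F Ω)
    [Algebra.IsQuadraticExtension F K] :
    Nat.card {L : IntermediateField F Ω // (Module.finrank F L = 4 ∧ IsGalois F L) ∧ K ≤ L} + 1 =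
      t + if kummerGroup F K ≤ normGroup F E then t else 0 := by
  rw [card_isGalois_finrank_four_ge, relIndex_square_comap_unitsNorm_kummerGroup,
    index_kummerGroup hF, kummerGroup_le_normGroup_iff_of_neg_one_mem hE hneg]
  split_ifs <;> omega

theorem three_mul_card_isGalois_finrank_four [Normal F Ω] {E : Type*} [Field E] [Algebra F E]
    [Algebra.IsQuadraticExtension F E] (hEneg : -1 ∈ kummerGroup F E)
    (hneg : -1 ∉ Subgroup.square Fˣ) {t : ℕ} (ht : 1 < t)
    (hF : (Subgroup.square Fˣ).index = 2 * t) (hE : (Subgroup.square Eˣ).index = t * t) :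
    3 * Nat.card {L : IntermediateField F Ω // Module.finrank F L = 4 ∧ IsGalois F L} =
      (t - 1) * (5 * t - 1) := by
  classical
  let quadratic (K : IntermediateField F Ω) : Prop := Module.finrank F K = 2
  let quartic (L : IntermediateField F Ω) : Prop := Module.finrank F L = 4 ∧ IsGalois F L
  have hquad (K : Subtype quadratic) : Algebra.IsQuadraticExtension F K.1 := ⟨K.2⟩
  refine three_mul_card_of_card_add_one_eq (fun K : Subtype quadratic ↦ fun L ↦ K.1 ≤ L.1)
    (fun K ↦ kummerGroup F K.1 ≤ normGroup F E) ht (card_finrank_eq_two hF) ?_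
    (fun K ↦ ?_) (fun L ↦ ?_) (fun K₁ K₂ hne ↦ ?_)
  · rw [← relIndex_square_normGroup (one_pos.trans ht) hF hE,
      ← card_kummerGroup_le (Ω := Ω) (square_le_normGroup F E)]
    exact Nat.card_congr (Equiv.subtypeSubtypeEquivSubtypeInter quadratic
      (fun K ↦ kummerGroup F K ≤ normGroup F E))
  · rw [← card_isGalois_finrank_four_ge_add_one hEneg hneg (one_pos.trans ht) hF]
    exact congrArg (· + 1) (Nat.card_congr (Equiv.subtypeSubtypeEquivSubtypeInter quartic _))
  · have := L.2.2
    rw [Nat.card_congr (Equiv.subtypeSubtypeEquivSubtypeInter quadratic (· ≤ L.1)),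
      card_finrank_eq_two_le]
    exact card_finrank_eq_two_of_finrank_eq_four L.2.1
  · obtain ⟨L, ⟨hL, hle⟩, hunique⟩ :=
      existsUnique_isGalois_finrank_four_ge_ge (Subtype.coe_ne_coe.2 hne)
    exact ⟨⟨L, hL⟩, hle, fun M hM ↦ Subtype.ext (hunique M ⟨M.2, hM⟩)⟩

end QuarticCount

theorem neg_one_notMem_square_of_not_exists_isPrimitiveRoot {F : Type*} [Field F] [NeZero (2 : F)]
    (h : ¬ ∃ ζ : F, IsPrimitiveRoot ζ 4) : -1 ∉ Subgroup.square Fˣ := by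
  rw [Subgroup.mem_square, ← isSquare_units_val_iff]
  rintro ⟨ζ, hζ⟩
  rw [Units.val_neg, Units.val_one, ← pow_two] at hζ
  have hne : ζ ^ 2 ≠ 1 := fun h ↦ two_ne_zero (α := F) (by linear_combination -hζ.trans h)
  refine h ⟨ζ, IsPrimitiveRoot.iff_orderOf.2 (orderOf_eq_prime_pow (p := 2) (n := 1) ?_ ?_)⟩
  · rwa [pow_one]
  · linear_combination (ζ ^ 2 - 1) * (-hζ)

theorem isGalois_and_commute_iff_of_finrank_eq_four {F L : Type*} [Field F] [Field L] [Algebra F L]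
    (hL : Module.finrank F L = 4) :
    (IsGalois F L ∧ ∀ σ τ : L ≃ₐ[F] L, σ * τ = τ * σ) ↔ IsGalois F L := by
  refine and_iff_left_of_imp fun _ ↦ ?_
  have := Module.finite_of_finrank_pos (hL ▸ four_pos)
  have := Fact.mk Nat.prime_two
  have hcard : Nat.card (L ≃ₐ[F] L) = 2 ^ 2 := (IsGalois.card_aut_eq_finrank F L).trans hL
  exact (IsPGroup.isMulCommutative_of_card_eq_prime_sq hcard).is_comm.comm

theorem sub_one_mul_five_mul_sub_one {x : ℕ} (hx : 0 < x) :
    (2 * x - 1) * (5 * (2 * x) - 1) = 20 * x ^ 2 - 12 * x + 1 := by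
  obtain ⟨y, rfl⟩ := Nat.exists_eq_add_one.2 hx
  have h₁ : 2 * (y + 1) - 1 = 2 * y + 1 := by omega
  have h₂ : 5 * (2 * (y + 1)) - 1 = 10 * y + 9 := by omega
  have h₃ : 20 * (y + 1) ^ 2 = 20 * y ^ 2 + 28 * y + 8 + 12 * (y + 1) := by ring
  rw [h₁, h₂, h₃, Nat.add_sub_cancel]
  ring

theorem stmt17 (F : Type*) [Field F] [Algebra ℚ_[2] F] [FiniteDimensional ℚ_[2] F]
    (m : ℕ) (hm : Module.finrank ℚ_[2] F = m)
    (hμ4 : ¬ ∃ ζ : F, IsPrimitiveRoot ζ 4) :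
    Nat.card {L : IntermediateField F (AlgebraicClosure F) //
        Module.finrank F L = 4 ∧ IsGalois F L ∧ ∀ σ τ : L ≃ₐ[F] L, σ * τ = τ * σ} =
      (20 * 2 ^ (2 * m) - 12 * 2 ^ m + 1) / 3 := by
  have : CharZero F := charZero_of_injective_algebraMap (algebraMap ℚ_[2] F).injective
  have hneg := neg_one_notMem_square_of_not_exists_isPrimitiveRoot hμ4
  obtain ⟨E, ⟨hE, hEneg⟩, -⟩ := existsUnique_mem_kummerGroup (Ω := AlgebraicClosure F) hneg
  have : Algebra.IsQuadraticExtension F E := ⟨hE⟩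
  have : FiniteDimensional ℚ_[2] E := Module.Finite.trans F E
  have hindexF : (Subgroup.square Fˣ).index = 2 * (2 * 2 ^ m) := by
    rw [index_square_units_of_padic_two, hm]
    ring
  have hindexE : (Subgroup.square Eˣ).index = 2 * 2 ^ m * (2 * 2 ^ m) := by
    rw [index_square_units_of_padic_two, ← Module.finrank_mul_finrank ℚ_[2] F E, hm, hE]
    ring
  have ht : 1 < 2 * 2 ^ m := by have := Nat.two_pow_pos m; omega
  have hcount := three_mul_card_isGalois_finrank_four (Ω := AlgebraicClosure F) hEneg hneg ht
    hindexF hindexE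
  rw [sub_one_mul_five_mul_sub_one (Nat.two_pow_pos m), ← pow_mul'] at hcount
  rw [← hcount, Nat.mul_div_cancel_left _ three_pos]
  exact Nat.card_congr (Equiv.subtypeEquivRight fun L ↦
    and_congr_right isGalois_and_commute_iff_of_finrank_eq_four)
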